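/- arXiv:2202.07737 — 3 statements merged into one kernel-verified Lean document; each statement's English description precedes it below -/
import Mathlib

section
/- Let c be a square-integrable real-valued random variable with E[c] = 1 and X a square-integrable random vector in ℝ^p, with c and X independent, and suppose ⟨X, 1⟩ = s almost surely for some constant s ∈ ℝ. Write μ = E[X] and Σ_cx = Cov(cX). Then Σ_cx·1 = Var(c)·(μᵀ1)·μ, i.e., applying the covariance matrix of cX to the all-ones vector yields the mean vector μ scaled by Var(c) times the sum of the entries of μ. -/
open MeasureTheory ProbabilityTheory Matrix

/-!
Covariance is bilinear, so the `i`-th entry of `Cov(cX) a` is `Cov(c Xᵢ, c ⟨X, a⟩)`. When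
`⟨X, a⟩ = s` almost surely, this is `s Cov(c Xᵢ, c)`, and independence of `c` and `Xᵢ` lets `E[Xᵢ]`
factor out, leaving `s Var(c) E[Xᵢ]`. Taking expectations in `⟨X, a⟩ = s` identifies `s` with
`⟨E[X], a⟩`.
-/

section General

variable {Ω : Type*} {mΩ : MeasurableSpace Ω} {μ : Measure Ω}

lemma covariance_congr_ae {f f' g g' : Ω → ℝ} (hf : f =ᵐ[μ] f') (hg : g =ᵐ[μ] g') :
    cov[f, g; μ] = cov[f', g'; μ] := by
  rw [covariance, covariance, integral_congr_ae hf, integral_congr_ae hg]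
  apply integral_congr_ae
  filter_upwards [hf, hg] with ω hfω hgω
  rw [hfω, hgω]

lemma memLp_mul_of_indepFun {R : Type*} [NormedRing R] [MeasurableSpace R]
    [OpensMeasurableSpace R] {f g : Ω → R} {p : ENNReal} (hfg : IndepFun f g μ)
    (hf : MemLp f p μ) (hg : MemLp g p μ) : MemLp (fun ω => f ω * g ω) p μ := by
  have hmeas : AEStronglyMeasurable (fun ω => f ω * g ω) μ := hf.1.mul hg.1
  rcases eq_or_ne p 0 with rfl | hp_zero
  · exact memLp_zero_iff_aestronglyMeasurable.2 hmeas
  rcases eq_or_ne p ⊤ with rfl | hp_top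
  · exact hg.mul' hf
  have hpow_indep : IndepFun (fun ω => ‖f ω‖ ^ p.toReal) (fun ω => ‖g ω‖ ^ p.toReal) μ :=
    hfg.comp (φ := fun x => ‖x‖ ^ p.toReal) (ψ := fun x => ‖x‖ ^ p.toReal)
      (by fun_prop) (by fun_prop)
  have hpow_integrable : Integrable (fun ω => ‖f ω‖ ^ p.toReal * ‖g ω‖ ^ p.toReal) μ :=
    hpow_indep.integrable_mul (hf.integrable_norm_rpow hp_zero hp_top)
      (hg.integrable_norm_rpow hp_zero hp_top)
  refine (integrable_norm_rpow_iff hmeas hp_zero hp_top).1 (hpow_integrable.mono' ?_ ?_)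
  · exact (hmeas.norm.aemeasurable.pow_const _).aestronglyMeasurable
  · filter_upwards with ω
    rw [Real.norm_of_nonneg (by positivity), ← Real.mul_rpow (norm_nonneg _) (norm_nonneg _)]
    gcongr
    exact norm_mul_le _ _

lemma covariance_mul_left_of_indepFun [IsProbabilityMeasure μ] {f g h : Ω → ℝ}
    (hf : MemLp f 2 μ) (hg : MemLp g 2 μ) (hh : MemLp h 2 μ)
    (hindep : IndepFun (fun ω => (f ω, g ω)) h μ) :
    cov[fun ω => f ω * h ω, g; μ] = cov[f, g; μ] * ∫ ω, h ω ∂μ := by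
  have hindep_f : IndepFun f h μ := hindep.comp measurable_fst measurable_id
  have hindep_fg : IndepFun (fun ω => f ω * g ω) h μ :=
    hindep.comp (measurable_fst.mul measurable_snd) measurable_id
  have integral_f_mul_h : ∫ ω, f ω * h ω ∂μ = (∫ ω, f ω ∂μ) * ∫ ω, h ω ∂μ :=
    hindep_f.integral_fun_mul_eq_mul_integral hf.1 hh.1
  have integral_f_mul_h_mul_g :
      ∫ ω, f ω * h ω * g ω ∂μ = (∫ ω, f ω * g ω ∂μ) * ∫ ω, h ω ∂μ := by
    simp_rw [mul_right_comm (f _) (h _) (g _)]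
    exact hindep_fg.integral_fun_mul_eq_mul_integral (hf.1.mul hg.1) hh.1
  rw [covariance_eq_sub (memLp_mul_of_indepFun hindep_f hf hh) hg, covariance_eq_sub hf hg]
  simp only [Pi.mul_apply, integral_f_mul_h, integral_f_mul_h_mul_g]
  ring

lemma covariance_mul_self_of_indepFun [IsProbabilityMeasure μ] {c f : Ω → ℝ}
    (hc : MemLp c 2 μ) (hf : MemLp f 2 μ) (hindep : IndepFun c f μ) :
    cov[fun ω => c ω * f ω, c; μ] = Var[c; μ] * ∫ ω, f ω ∂μ := by
  have hindep_pair : IndepFun (fun ω => (c ω, c ω)) f μ :=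
    hindep.comp (measurable_id.prodMk measurable_id) measurable_id
  rw [covariance_mul_left_of_indepFun hc hc hf hindep_pair, covariance_self hc.aemeasurable]

variable {ι : Type*} [Fintype ι]

lemma covariance_matrix_mulVec [IsFiniteMeasure μ] {κ : Type*} {Y : κ → Ω → ℝ} {Z : ι → Ω → ℝ}
    (hY : ∀ k, MemLp (Y k) 2 μ) (hZ : ∀ i, MemLp (Z i) 2 μ) (a : ι → ℝ) :
    (Matrix.of fun k i => cov[Y k, Z i; μ]) *ᵥ a
      = fun k => cov[Y k, fun ω => ∑ i, Z i ω * a i; μ] := by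
  ext k
  rw [covariance_fun_sum_right (fun i => (hZ i).mul_const (a i)) (hY k)]
  simp only [mulVec, dotProduct, of_apply, covariance_mul_const_right]

lemma integral_dotProduct_const {X : Ω → ι → ℝ} (hX : ∀ i, Integrable (fun ω => X ω i) μ)
    (a : ι → ℝ) : ∫ ω, X ω ⬝ᵥ a ∂μ = (fun i => ∫ ω, X ω i ∂μ) ⬝ᵥ a := by
  simp only [dotProduct]
  rw [integral_finsetSum _ fun i _ => (hX i).mul_const (a i)]
  simp only [integral_mul_const]

theorem cov_smul_mulVec_ones_eq_var_smul_mean_general [IsProbabilityMeasure μ]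
    {c : Ω → ℝ} {X : Ω → ι → ℝ} (hc : MemLp c 2 μ) (hX : ∀ i, MemLp (fun ω => X ω i) 2 μ)
    (hindep : ∀ i, IndepFun c (fun ω => X ω i) μ)
    {a : ι → ℝ} {s : ℝ} (hs : ∀ᵐ ω ∂μ, X ω ⬝ᵥ a = s) :
    (Matrix.of fun i j => cov[fun ω => c ω * X ω i, fun ω => c ω * X ω j; μ]) *ᵥ a
      = (Var[c; μ] * (fun i => ∫ ω, X ω i ∂μ) ⬝ᵥ a) • fun i => ∫ ω, X ω i ∂μ := by
  have hcX (i : ι) : MemLp (fun ω => c ω * X ω i) 2 μ := memLp_mul_of_indepFun (hindep i) hc (hX i)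
  have mean_dotProduct : (fun i => ∫ ω, X ω i ∂μ) ⬝ᵥ a = s := by
    rw [← integral_dotProduct_const (fun i => (hX i).integrable one_le_two), integral_congr_ae hs]
    simp
  have sum_ae_eq : (fun ω => ∑ j, c ω * X ω j * a j) =ᵐ[μ] fun ω => c ω * s := by
    filter_upwards [hs] with ω hω
    simp only [← hω, dotProduct, Finset.mul_sum, mul_assoc]
  rw [covariance_matrix_mulVec hcX hcX, mean_dotProduct]
  ext i
  calc cov[fun ω => c ω * X ω i, fun ω => ∑ j, c ω * X ω j * a j; μ]
      = cov[fun ω => c ω * X ω i, fun ω => c ω * s; μ] := covariance_congr_ae .rfl sum_ae_eq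
    _ = Var[c; μ] * (∫ ω, X ω i ∂μ) * s := by
      rw [covariance_mul_const_right, covariance_mul_self_of_indepFun hc (hX i) (hindep i)]
    _ = (Var[c; μ] * s) * ∫ ω, X ω i ∂μ := mul_right_comm _ _ _

end General

/-- If `E[c] = 1`, `c` is independent of the square-integrable random vector
`X`, and `⟨X, 1⟩ = s` almost surely, then writing `μ = E[X]` and `Σ_cx = Cov(cX)`, we have
`Σ_cx · 1 = Var(c) · (μᵀ1) · μ`. -/
theorem cov_smul_mulVec_ones_eq_var_smul_mean
    {Ω : Type*} [MeasureSpace Ω] [IsProbabilityMeasure (ℙ : Measure Ω)]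
    {p : ℕ} (c : Ω → ℝ) (X : Ω → Fin p → ℝ)
    (hc : MemLp c 2 ℙ) (hX : ∀ i, MemLp (fun ω => X ω i) 2 ℙ)
    (hindep : IndepFun c X ℙ) (hEc : ∫ ω, c ω = 1)
    (s : ℝ) (hsum : ∀ᵐ ω ∂ℙ, ∑ i, X ω i = s) :
    (Matrix.of fun i j =>
        ∫ ω, (c ω * X ω i - ∫ ω', c ω' * X ω' i) * (c ω * X ω j - ∫ ω', c ω' * X ω' j))
        *ᵥ (fun _ => (1 : ℝ))
      = (variance c ℙ * ∑ i, ∫ ω, X ω i) • (fun i => ∫ ω, X ω i) := by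
  simpa [covariance, dotProduct] using cov_smul_mulVec_ones_eq_var_smul_mean_general hc hX
    (fun i => hindep.comp measurable_id (measurable_pi_apply i)) (a := fun _ => 1) (s := s)
    (by simpa [dotProduct] using hsum)
end

section
/- Let x : Ω → ℝ^p and ε : Ω → ℝ^m be square-integrable random vectors on a probability space, with E[x] = μ, Cov(x) = Σ, E[ε] = 0, Cov(ε) = σ²I with σ > 0, and E[(x − μ)εᵀ] = 0 (x and ε uncorrelated). Let A ∈ ℝ^{m×p} and y = Ax + ε. Then the matrix AΣAᵀ + σ²I is invertible, and the affine estimator x̂* = μ + ΣAᵀ(AΣAᵀ + σ²I)⁻¹(y − Aμ) minimizes the mean squared error among all affine estimators: for every matrix W ∈ ℝ^{p×m} and vector b ∈ ℝ^p, E‖x̂* − x‖² ≤ E‖b + Wy − x‖². -/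
open MeasureTheory ProbabilityTheory Matrix

/-!
Let `K` solve the normal equation `K Cov(Y) = Cov(X, Y)`. Then the error `KY - X` is uncorrelated
with `Y`. The error of any other affine estimator is `KY - X` plus an affine function of `Y`, so its
variance, and a fortiori its second moment, is at least the variance of `KY - X`, which is the
second moment of the error once the estimator is centred. In the linear model `Y = AX + ε` one has
`Cov(X, Y) = SAᵀ` and `Cov(Y) = ASAᵀ + Cov(ε)`, and the latter is positive definite as soon as
`Cov(ε)` is.
-/

section RandomVector

variable {Ω ι κ τ : Type*} [MeasurableSpace Ω] {P : Measure Ω}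

section LinearImage

variable [Fintype ι] {X : Ω → ι → ℝ}

lemma memLp_dotProduct {q : ENNReal} (hX : ∀ i, MemLp (fun ω => X ω i) q P) (v : ι → ℝ) :
    MemLp (fun ω => v ⬝ᵥ X ω) q P :=
  memLp_finsetSum _ fun i _ => (hX i).const_mul (v i)

lemma memLp_mulVec {q : ENNReal} (hX : ∀ i, MemLp (fun ω => X ω i) q P) (A : Matrix κ ι ℝ) (j : κ) :
    MemLp (fun ω => (A *ᵥ X ω) j) q P :=
  memLp_dotProduct hX (A j)

lemma integral_dotProduct (hX : ∀ i, Integrable (fun ω => X ω i) P) (v : ι → ℝ) :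
    ∫ ω, v ⬝ᵥ X ω ∂P = v ⬝ᵥ fun i => ∫ ω, X ω i ∂P := by
  simp only [dotProduct]
  rw [integral_finsetSum _ fun i _ => (hX i).const_mul (v i)]
  simp only [integral_const_mul]

lemma integrable_mulVec (hX : ∀ i, Integrable (fun ω => X ω i) P) (A : Matrix κ ι ℝ) (j : κ) :
    Integrable (fun ω => (A *ᵥ X ω) j) P :=
  integrable_finsetSum _ fun i _ => (hX i).const_mul (A j i)

lemma integral_mulVec {μ : ι → ℝ} (hX : ∀ i, Integrable (fun ω => X ω i) P)
    (hμ : ∀ i, ∫ ω, X ω i ∂P = μ i) (A : Matrix κ ι ℝ) (j : κ) :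
    ∫ ω, (A *ᵥ X ω) j ∂P = (A *ᵥ μ) j := by
  rw [← funext hμ]
  exact integral_dotProduct hX (A j)

lemma integral_mulVec_add {Z : Ω → κ → ℝ} {μ : ι → ℝ} {ν : κ → ℝ}
    (hX : ∀ i, Integrable (fun ω => X ω i) P) (hZ : ∀ j, Integrable (fun ω => Z ω j) P)
    (hμ : ∀ i, ∫ ω, X ω i ∂P = μ i) (hν : ∀ j, ∫ ω, Z ω j ∂P = ν j) (A : Matrix κ ι ℝ) (j : κ) :
    ∫ ω, (A *ᵥ X ω + Z ω) j ∂P = (A *ᵥ μ + ν) j := by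
  simp only [Pi.add_apply]
  rw [integral_add (integrable_mulVec hX A j) (hZ j), integral_mulVec hX hμ, hν]

lemma integral_mulVec_sub {Z : Ω → κ → ℝ} {μ : ι → ℝ} {ν : κ → ℝ}
    (hX : ∀ i, Integrable (fun ω => X ω i) P) (hZ : ∀ j, Integrable (fun ω => Z ω j) P)
    (hμ : ∀ i, ∫ ω, X ω i ∂P = μ i) (hν : ∀ j, ∫ ω, Z ω j ∂P = ν j) (A : Matrix κ ι ℝ) (j : κ) :
    ∫ ω, (A *ᵥ X ω - Z ω) j ∂P = (A *ᵥ μ - ν) j := by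
  simp only [Pi.sub_apply]
  rw [integral_sub (integrable_mulVec hX A j) (hZ j), integral_mulVec hX hμ, hν]

lemma covariance_dotProduct_left [IsFiniteMeasure P] {Z : Ω → ℝ}
    (hX : ∀ i, MemLp (fun ω => X ω i) 2 P) (hZ : MemLp Z 2 P) (v : ι → ℝ) :
    cov[fun ω => v ⬝ᵥ X ω, Z; P] = v ⬝ᵥ fun i => cov[fun ω => X ω i, Z; P] := by
  simp only [dotProduct]
  rw [covariance_fun_sum_left (fun i => (hX i).const_mul (v i)) hZ]
  simp only [covariance_const_mul_left]

end LinearImage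

/-- The cross-covariance matrix `Cov(X, Y) = E[(X - E[X])(Y - E[Y])ᵀ]` of two random vectors;
`crossCov X X P` is the covariance matrix of `X`. -/
noncomputable def crossCov (X : Ω → ι → ℝ) (Y : Ω → κ → ℝ) (P : Measure Ω) : Matrix ι κ ℝ :=
  of fun i j => cov[fun ω => X ω i, fun ω => Y ω j; P]

section CrossCov

variable {X : Ω → ι → ℝ} {Y : Ω → κ → ℝ}

lemma crossCov_eq_of_integral_eq {μ : ι → ℝ} {ν : κ → ℝ} {C : Matrix ι κ ℝ}
    (hμ : ∀ i, ∫ ω, X ω i ∂P = μ i) (hν : ∀ j, ∫ ω, Y ω j ∂P = ν j)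
    (hC : ∀ i j, ∫ ω, (X ω i - μ i) * (Y ω j - ν j) ∂P = C i j) :
    crossCov X Y P = C := by
  ext i j
  simp only [crossCov, of_apply, covariance, hμ, hν, hC]

lemma transpose_crossCov (X : Ω → ι → ℝ) (Y : Ω → κ → ℝ) :
    (crossCov X Y P)ᵀ = crossCov Y X P := by
  ext i j
  exact covariance_comm _ _

variable [IsFiniteMeasure P]

lemma crossCov_add_left {X' : Ω → ι → ℝ} (hX : ∀ i, MemLp (fun ω => X ω i) 2 P)
    (hX' : ∀ i, MemLp (fun ω => X' ω i) 2 P) (hY : ∀ j, MemLp (fun ω => Y ω j) 2 P) :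
    crossCov (fun ω => X ω + X' ω) Y P = crossCov X Y P + crossCov X' Y P := by
  ext i j
  exact covariance_add_left (hX i) (hX' i) (hY j)

lemma crossCov_add_right {Y' : Ω → κ → ℝ} (hX : ∀ i, MemLp (fun ω => X ω i) 2 P)
    (hY : ∀ j, MemLp (fun ω => Y ω j) 2 P) (hY' : ∀ j, MemLp (fun ω => Y' ω j) 2 P) :
    crossCov X (fun ω => Y ω + Y' ω) P = crossCov X Y P + crossCov X Y' P := by
  ext i j
  exact covariance_add_right (hX i) (hY j) (hY' j)

lemma crossCov_sub_left {X' : Ω → ι → ℝ} (hX : ∀ i, MemLp (fun ω => X ω i) 2 P)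
    (hX' : ∀ i, MemLp (fun ω => X' ω i) 2 P) (hY : ∀ j, MemLp (fun ω => Y ω j) 2 P) :
    crossCov (fun ω => X ω - X' ω) Y P = crossCov X Y P - crossCov X' Y P := by
  ext i j
  exact covariance_sub_left (hX i) (hX' i) (hY j)

lemma crossCov_mulVec_left [Fintype ι] (hX : ∀ i, MemLp (fun ω => X ω i) 2 P)
    (hY : ∀ j, MemLp (fun ω => Y ω j) 2 P) (A : Matrix τ ι ℝ) :
    crossCov (fun ω => A *ᵥ X ω) Y P = A * crossCov X Y P := by
  ext i j
  exact covariance_dotProduct_left hX (hY j) (A i)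

lemma crossCov_mulVec_right [Fintype κ] (hX : ∀ i, MemLp (fun ω => X ω i) 2 P)
    (hY : ∀ j, MemLp (fun ω => Y ω j) 2 P) (A : Matrix τ κ ℝ) :
    crossCov X (fun ω => A *ᵥ Y ω) P = crossCov X Y P * Aᵀ := by
  rw [← transpose_crossCov, crossCov_mulVec_left hY hX, transpose_mul, transpose_crossCov]

lemma posSemidef_crossCov_self [Finite ι] (hX : ∀ i, MemLp (fun ω => X ω i) 2 P) :
    (crossCov X X P).PosSemidef := by
  have := Fintype.ofFinite ι
  refine .of_dotProduct_mulVec_nonneg (transpose_crossCov X X) fun v => ?_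
  have hvX : MemLp (fun ω => v ⬝ᵥ X ω) 2 P := memLp_dotProduct hX v
  have quadratic_form_eq_variance :
      v ⬝ᵥ (crossCov X X P *ᵥ v) = Var[fun ω => v ⬝ᵥ X ω; P] := by
    rw [← covariance_self hvX.aemeasurable, covariance_dotProduct_left hX hvX,
      ← transpose_crossCov]
    congr 1 with i
    rw [covariance_comm, covariance_dotProduct_left hX (hX i), dotProduct_comm]
    rfl
  rw [star_trivial, quadratic_form_eq_variance]
  exact variance_nonneg _ _

lemma crossCov_mulVec_sub_eq_zero [Fintype κ] (hX : ∀ i, MemLp (fun ω => X ω i) 2 P)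
    (hY : ∀ j, MemLp (fun ω => Y ω j) 2 P) {K : Matrix ι κ ℝ}
    (hK : K * crossCov Y Y P = crossCov X Y P) :
    crossCov (fun ω => K *ᵥ Y ω - X ω) Y P = 0 := by
  rw [crossCov_sub_left (memLp_mulVec hY K) hX hY, crossCov_mulVec_left hY hY, hK, sub_self]

end CrossCov

section LinearModel

variable [Fintype ι] {X : Ω → ι → ℝ} {ε : Ω → κ → ℝ}

lemma memLp_mulVec_add {q : ENNReal} (hX : ∀ i, MemLp (fun ω => X ω i) q P)
    (hε : ∀ j, MemLp (fun ω => ε ω j) q P) (A : Matrix κ ι ℝ) (j : κ) :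
    MemLp (fun ω => (A *ᵥ X ω + ε ω) j) q P :=
  (memLp_mulVec hX A j).add (hε j)

variable [IsFiniteMeasure P]

lemma crossCov_mulVec_add_right_of_uncorrelated (hX : ∀ i, MemLp (fun ω => X ω i) 2 P)
    (hε : ∀ j, MemLp (fun ω => ε ω j) 2 P) (hXε : crossCov X ε P = 0) (A : Matrix κ ι ℝ) :
    crossCov X (fun ω => A *ᵥ X ω + ε ω) P = crossCov X X P * Aᵀ := by
  rw [crossCov_add_right hX (memLp_mulVec hX A) hε, crossCov_mulVec_right hX hX, hXε, add_zero]

lemma crossCov_mulVec_add_self_of_uncorrelated (hX : ∀ i, MemLp (fun ω => X ω i) 2 P)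
    (hε : ∀ j, MemLp (fun ω => ε ω j) 2 P) (hXε : crossCov X ε P = 0) (A : Matrix κ ι ℝ) :
    crossCov (fun ω => A *ᵥ X ω + ε ω) (fun ω => A *ᵥ X ω + ε ω) P =
      A * crossCov X X P * Aᵀ + crossCov ε ε P := by
  have hY : ∀ j, MemLp (fun ω => (A *ᵥ X ω + ε ω) j) 2 P := memLp_mulVec_add hX hε A
  have noise_observation : crossCov ε (fun ω => A *ᵥ X ω + ε ω) P = crossCov ε ε P := by
    rw [crossCov_add_right hε (memLp_mulVec hX A) hε, crossCov_mulVec_right hε hX,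
      ← transpose_crossCov, hXε, transpose_zero, Matrix.zero_mul, zero_add]
  rw [crossCov_add_left (memLp_mulVec hX A) hε hY, crossCov_mulVec_left hX hY,
    crossCov_mulVec_add_right_of_uncorrelated hX hε hXε, noise_observation, Matrix.mul_assoc]

end LinearModel

section AffineEstimation

lemma memLp_affine_sub [IsFiniteMeasure P] [Fintype κ] {X : Ω → ι → ℝ} {Y : Ω → κ → ℝ}
    {q : ENNReal} (hX : ∀ i, MemLp (fun ω => X ω i) q P)
    (hY : ∀ j, MemLp (fun ω => Y ω j) q P) (W : Matrix ι κ ℝ) (b : ι → ℝ) (i : ι) :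
    MemLp (fun ω => (b + W *ᵥ Y ω) i - X ω i) q P :=
  ((memLp_const (b i)).add (memLp_mulVec hY W i)).sub (hX i)

variable [IsProbabilityMeasure P]

lemma integral_sub_integral_sq_le_of_covariance_eq_zero {U V : Ω → ℝ} (hU : MemLp U 2 P)
    (hV : MemLp V 2 P) (hUV : cov[U, V; P] = 0) :
    ∫ ω, (U ω - P[U]) ^ 2 ∂P ≤ ∫ ω, (U ω + V ω) ^ 2 ∂P :=
  calc
    ∫ ω, (U ω - P[U]) ^ 2 ∂P = Var[U; P] := (variance_eq_integral hU.aemeasurable).symm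
    _ ≤ Var[U; P] + Var[V; P] := le_add_of_nonneg_right (variance_nonneg V P)
    _ = Var[U + V; P] := by rw [variance_add hU hV, hUV, mul_zero, add_zero]
    _ ≤ ∫ ω, (U ω + V ω) ^ 2 ∂P := variance_le_expectation_sq (hU.add hV).aestronglyMeasurable

variable [Fintype κ] {X : Ω → ι → ℝ} {Y : Ω → κ → ℝ} {μ : ι → ℝ} {ν : κ → ℝ} {K : Matrix ι κ ℝ}

lemma covariance_mulVec_sub_affine_eq_zero (hX : ∀ i, MemLp (fun ω => X ω i) 2 P)
    (hY : ∀ j, MemLp (fun ω => Y ω j) 2 P) (hK : K * crossCov Y Y P = crossCov X Y P)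
    (v : κ → ℝ) (i : ι) (c : ℝ) :
    cov[fun ω => (K *ᵥ Y ω - X ω) i, fun ω => v ⬝ᵥ Y ω + c; P] = 0 := by
  have error_memLp : MemLp (fun ω => (K *ᵥ Y ω - X ω) i) 2 P := (memLp_mulVec hY K i).sub (hX i)
  have uncorrelated (j : κ) : cov[fun ω => Y ω j, fun ω => (K *ᵥ Y ω - X ω) i; P] = 0 := by
    rw [covariance_comm]
    exact congr_fun₂ (crossCov_mulVec_sub_eq_zero hX hY hK) i j
  rw [covariance_add_const_right ((memLp_dotProduct hY v).integrable one_le_two), covariance_comm,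
    covariance_dotProduct_left hY error_memLp, funext uncorrelated]
  exact dotProduct_zero v

lemma integral_affine_sub_sq_le (hX : ∀ i, MemLp (fun ω => X ω i) 2 P)
    (hY : ∀ j, MemLp (fun ω => Y ω j) 2 P) (hμ : ∀ i, ∫ ω, X ω i ∂P = μ i)
    (hν : ∀ j, ∫ ω, Y ω j ∂P = ν j) (hK : K * crossCov Y Y P = crossCov X Y P)
    (W : Matrix ι κ ℝ) (b : ι → ℝ) (i : ι) :
    ∫ ω, ((μ + K *ᵥ (Y ω - ν)) i - X ω i) ^ 2 ∂P ≤
      ∫ ω, ((b + W *ᵥ Y ω) i - X ω i) ^ 2 ∂P := by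
  have optimal_error (ω : Ω) : (μ + K *ᵥ (Y ω - ν)) i - X ω i =
      (K *ᵥ Y ω - X ω) i - ∫ ω, (K *ᵥ Y ω - X ω) i ∂P := by
    rw [integral_mulVec_sub (fun j => (hY j).integrable one_le_two)
      (fun i => (hX i).integrable one_le_two) hν hμ]
    simp only [mulVec_sub, Pi.add_apply, Pi.sub_apply]
    ring
  have competing_error (ω : Ω) : (b + W *ᵥ Y ω) i - X ω i =
      (K *ᵥ Y ω - X ω) i + (((W - K) *ᵥ Y ω) i + b i) := by
    simp only [sub_mulVec, Pi.add_apply, Pi.sub_apply]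
    ring
  simp only [optimal_error, competing_error]
  exact integral_sub_integral_sq_le_of_covariance_eq_zero ((memLp_mulVec hY K i).sub (hX i))
    ((memLp_mulVec hY _ i).add (memLp_const _))
    (covariance_mulVec_sub_affine_eq_zero hX hY hK ((W - K) i) i (b i))

theorem integral_sum_affine_sub_sq_le [Fintype ι] (hX : ∀ i, MemLp (fun ω => X ω i) 2 P)
    (hY : ∀ j, MemLp (fun ω => Y ω j) 2 P) (hμ : ∀ i, ∫ ω, X ω i ∂P = μ i)
    (hν : ∀ j, ∫ ω, Y ω j ∂P = ν j) (hK : K * crossCov Y Y P = crossCov X Y P)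
    (W : Matrix ι κ ℝ) (b : ι → ℝ) :
    ∫ ω, ∑ i, ((μ + K *ᵥ (Y ω - ν)) i - X ω i) ^ 2 ∂P ≤
      ∫ ω, ∑ i, ((b + W *ᵥ Y ω) i - X ω i) ^ 2 ∂P := by
  have hY_centred (j : κ) : MemLp (fun ω => (Y ω - ν) j) 2 P := (hY j).sub (memLp_const (ν j))
  rw [integral_finsetSum _ fun i _ => (memLp_affine_sub hX hY_centred K μ i).integrable_sq,
    integral_finsetSum _ fun i _ => (memLp_affine_sub hX hY W b i).integrable_sq]
  exact Finset.sum_le_sum fun i _ => integral_affine_sub_sq_le hX hY hμ hν hK W b i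

end AffineEstimation

theorem cwf_is_lmmse_general [IsProbabilityMeasure P] [Fintype ι] [Fintype κ] [DecidableEq κ]
    {x : Ω → ι → ℝ} {ε : Ω → κ → ℝ} {μ : ι → ℝ} {S : Matrix ι ι ℝ} {R : Matrix κ κ ℝ}
    (hR : R.PosDef) (A : Matrix κ ι ℝ)
    (hx2 : ∀ i, MemLp (fun ω => x ω i) 2 P) (hε2 : ∀ j, MemLp (fun ω => ε ω j) 2 P)
    (hμ : ∀ i, ∫ ω, x ω i ∂P = μ i)
    (hS : ∀ i j, ∫ ω, (x ω i - μ i) * (x ω j - μ j) ∂P = S i j)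
    (hεmean : ∀ j, ∫ ω, ε ω j ∂P = 0) (hεcov : ∀ i j, ∫ ω, ε ω i * ε ω j ∂P = R i j)
    (hcross : ∀ i j, ∫ ω, (x ω i - μ i) * ε ω j ∂P = 0)
    {y : Ω → κ → ℝ} (hy : ∀ ω, y ω = A *ᵥ x ω + ε ω) :
    IsUnit (A * S * Aᵀ + R) ∧
    ∀ (W : Matrix ι κ ℝ) (b : ι → ℝ),
      ∫ ω, ∑ i, ((μ + (S * Aᵀ) *ᵥ ((A * S * Aᵀ + R)⁻¹ *ᵥ (y ω - A *ᵥ μ))) i - x ω i) ^ 2 ∂P ≤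
        ∫ ω, ∑ i, ((b + W *ᵥ y ω) i - x ω i) ^ 2 ∂P := by
  have mean_y (j : κ) : ∫ ω, y ω j ∂P = (A *ᵥ μ) j := by
    simpa only [hy, add_zero] using
      integral_mulVec_add (ν := 0) (fun i => (hx2 i).integrable one_le_two)
        (fun j => (hε2 j).integrable one_le_two) hμ hεmean A j
  obtain rfl : y = fun ω => A *ᵥ x ω + ε ω := funext hy
  have cov_x : crossCov x x P = S := crossCov_eq_of_integral_eq hμ hμ hS
  have cov_ε : crossCov ε ε P = R :=
    crossCov_eq_of_integral_eq hεmean hεmean (by simpa only [sub_zero] using hεcov)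
  have cov_xε : crossCov x ε P = 0 :=
    crossCov_eq_of_integral_eq hμ hεmean (by simpa only [sub_zero, Matrix.zero_apply] using hcross)
  have isUnit_cov_y : IsUnit (A * S * Aᵀ + R) :=
    (PosDef.posSemidef_add
      (cov_x ▸ (posSemidef_crossCov_self hx2).mul_mul_conjTranspose_same A) hR).isUnit
  refine ⟨isUnit_cov_y, fun W b => ?_⟩
  simp only [mulVec_mulVec]
  refine integral_sum_affine_sub_sq_le hx2 (memLp_mulVec_add hx2 hε2 A) hμ mean_y ?_ W b
  rw [crossCov_mulVec_add_self_of_uncorrelated hx2 hε2 cov_xε,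
    crossCov_mulVec_add_right_of_uncorrelated hx2 hε2 cov_xε, cov_x, cov_ε, Matrix.mul_assoc,
    nonsing_inv_mul _ ((isUnit_iff_isUnit_det _).1 isUnit_cov_y), Matrix.mul_one]

end RandomVector

/-- Under the linear model `y = Ax + ε` with `E[x] = μ`, `Cov(x) = S`,
`E[ε] = 0`, `Cov(ε) = σ²I` (`σ > 0`), and `x`, `ε` uncorrelated, the matrix `ASAᵀ + σ²I`
is invertible and the affine estimator `x̂* = μ + SAᵀ(ASAᵀ + σ²I)⁻¹(y − Aμ)` minimizes the
mean squared error among all affine estimators `b + Wy`. -/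
theorem cwf_is_lmmse
    {Ω : Type*} [MeasureSpace Ω] [IsProbabilityMeasure (ℙ : Measure Ω)]
    {p m : ℕ} (x : Ω → Fin p → ℝ) (ε : Ω → Fin m → ℝ)
    (μ : Fin p → ℝ) (S : Matrix (Fin p) (Fin p) ℝ) (σ : ℝ) (hσ : 0 < σ)
    (A : Matrix (Fin m) (Fin p) ℝ)
    (hx2 : ∀ i, MemLp (fun ω => x ω i) 2 ℙ)
    (hε2 : ∀ i, MemLp (fun ω => ε ω i) 2 ℙ)
    (hμ : ∀ i, ∫ ω, x ω i = μ i)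
    (hS : ∀ i j, ∫ ω, (x ω i - μ i) * (x ω j - μ j) = S i j)
    (hεmean : ∀ i, ∫ ω, ε ω i = 0)
    (hεcov : ∀ i j, ∫ ω, ε ω i * ε ω j = (σ ^ 2 • (1 : Matrix (Fin m) (Fin m) ℝ)) i j)
    (hcross : ∀ i j, ∫ ω, (x ω i - μ i) * ε ω j = 0)
    (y : Ω → Fin m → ℝ) (hy : ∀ ω, y ω = A *ᵥ x ω + ε ω) :
    IsUnit (A * S * Aᵀ + σ ^ 2 • (1 : Matrix (Fin m) (Fin m) ℝ)) ∧
    ∀ (W : Matrix (Fin p) (Fin m) ℝ) (b : Fin p → ℝ),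
      (∫ ω, ∑ i,
          ((μ + (S * Aᵀ) *ᵥ
              ((A * S * Aᵀ + σ ^ 2 • (1 : Matrix (Fin m) (Fin m) ℝ))⁻¹ *ᵥ
                (y ω - A *ᵥ μ))) i - x ω i) ^ 2)
        ≤ ∫ ω, ∑ i, ((b + W *ᵥ y ω) i - x ω i) ^ 2 :=
  cwf_is_lmmse_general (PosDef.one.smul (pow_pos hσ 2)) A hx2 hε2 hμ hS hεmean hεcov hcross hy
end

section
/- Let A₁, …, Aₙ ∈ ℝ^{m×p}, let B₁, …, Bₙ ∈ ℝ^{m×m} be symmetric matrices, and let σ ≥ 0. A symmetric matrix Σ ∈ ℝ^{p×p} minimizes the objective G(Σ) = Σᵢ₌₁ⁿ ‖Bᵢ − (AᵢΣAᵢᵀ + σ²I)‖_F² over all symmetric p×p matrices if and only if it satisfies the linear system Σᵢ₌₁ⁿ AᵢᵀAᵢ Σ AᵢᵀAᵢ = Σᵢ₌₁ⁿ Aᵢᵀ Bᵢ Aᵢ − σ² Σᵢ₌₁ⁿ AᵢᵀAᵢ. (This is the first-order optimality condition obtained by setting the gradient of the convex quadratic objective to zero.) -/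
open Matrix

/-!
Along a symmetric direction `D` the objective expands exactly as
`G (S + D) = G S - 2 tr (Mᵀ D) + ∑ᵢ ‖Aᵢ D Aᵢᵀ‖²`, where `M = ∑ᵢ Aᵢᵀ (Tᵢ - Aᵢ S Aᵢᵀ) Aᵢ` and
`Tᵢ = Bᵢ - σ² I`. Since the quadratic term is nonnegative, `S` is a minimizer iff the linear term
vanishes on symmetric matrices. As `M` is itself symmetric, it may be tested against `D = M`,
which forces `M = 0`, and this is the linear system.
-/

section QuadraticMinimization

variable {𝕜 E : Type*} [Field 𝕜] [LinearOrder 𝕜] [IsStrictOrderedRing 𝕜]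
  [AddCommGroup E] [Module 𝕜 E]

theorem eq_zero_of_forall_nonneg_mul_add_mul_sq {a b : 𝕜} (h : ∀ t : 𝕜, 0 ≤ t * b + t ^ 2 * a) :
    b = 0 := by
  have hdiscrim : discrim a b 0 ≤ 0 := discrim_le_zero fun t ↦ by linear_combination h t
  have hb : b ^ 2 ≤ 0 := by simpa [discrim] using hdiscrim
  exact pow_eq_zero_iff two_ne_zero |>.1 (hb.antisymm (sq_nonneg b))

theorem isMinOn_submodule_iff_of_quadratic_expansion {V : Submodule 𝕜 E} {f ℓ q : E → 𝕜} {x : E}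
    (hx : x ∈ V) (hf : ∀ d ∈ V, f (x + d) = f x + ℓ d + q d)
    (hℓ : ∀ (t : 𝕜), ∀ d ∈ V, ℓ (t • d) = t * ℓ d)
    (hq : ∀ (t : 𝕜), ∀ d ∈ V, q (t • d) = t ^ 2 * q d) (hq_nonneg : ∀ d ∈ V, 0 ≤ q d) :
    IsMinOn f V x ↔ ∀ d ∈ V, ℓ d = 0 := by
  rw [isMinOn_iff]
  constructor
  · intro hmin d hd
    refine eq_zero_of_forall_nonneg_mul_add_mul_sq (a := q d) fun t ↦ ?_
    have htd : t • d ∈ V := V.smul_mem t hd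
    have hle := hmin (x + t • d) (V.add_mem hx htd)
    rw [hf _ htd, hℓ t d hd, hq t d hd] at hle
    linarith
  · intro hℓ_zero y hy
    have hd : y - x ∈ V := V.sub_mem hy hx
    have hexpand := hf (y - x) hd
    rw [add_sub_cancel, hℓ_zero _ hd] at hexpand
    linarith [hq_nonneg _ hd]

end QuadraticMinimization

section Frobenius

variable {R m n : Type*} [Fintype m] [Fintype n]

/-- The squared Frobenius norm, as the sum of the squared entries, so that it makes sense over any
semiring. -/
def frobeniusSq [Semiring R] (X : Matrix m n R) : R :=
  ∑ k, ∑ l, X k l ^ 2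

theorem trace_transpose_mul_eq_sum [NonUnitalNonAssocSemiring R] (X Y : Matrix m n R) :
    trace (Xᵀ * Y) = ∑ k, ∑ l, X k l * Y k l := by
  simp only [trace, diag, mul_apply, transpose_apply]
  exact Finset.sum_comm

theorem trace_transpose_mul_self [CommSemiring R] (X : Matrix m n R) :
    trace (Xᵀ * X) = frobeniusSq X := by
  simp only [trace_transpose_mul_eq_sum, frobeniusSq, sq]

theorem frobeniusSq_sub [CommRing R] (X Y : Matrix m n R) :
    frobeniusSq (X - Y) = frobeniusSq X - 2 * trace (Xᵀ * Y) + frobeniusSq Y := by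
  simp only [frobeniusSq, trace_transpose_mul_eq_sum, Finset.mul_sum, ← Finset.sum_sub_distrib,
    ← Finset.sum_add_distrib, Matrix.sub_apply]
  exact Finset.sum_congr rfl fun k _ ↦ Finset.sum_congr rfl fun l _ ↦ by ring

theorem frobeniusSq_smul [CommSemiring R] (t : R) (X : Matrix m n R) :
    frobeniusSq (t • X) = t ^ 2 * frobeniusSq X := by
  simp only [frobeniusSq, Matrix.smul_apply, smul_eq_mul, mul_pow, Finset.mul_sum]

section Ordered

variable [CommRing R] [LinearOrder R] [IsStrictOrderedRing R]

theorem frobeniusSq_nonneg (X : Matrix m n R) : 0 ≤ frobeniusSq X :=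
  Finset.sum_nonneg fun _ _ ↦ Finset.sum_nonneg fun _ _ ↦ sq_nonneg _

theorem frobeniusSq_eq_zero_iff {X : Matrix m n R} : frobeniusSq X = 0 ↔ X = 0 := by
  rw [← trace_transpose_mul_self, ← vec_dotProduct_vec, dotProduct_self_eq_zero, vec_eq_zero_iff]

end Ordered

theorem trace_transpose_mul_congruence [CommSemiring R] (A : Matrix m n R) (X : Matrix m m R)
    (D : Matrix n n R) :
    trace (Xᵀ * (A * D * Aᵀ)) = trace ((Aᵀ * X * A)ᵀ * D) := by
  rw [← Matrix.mul_assoc, trace_mul_comm]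
  simp only [transpose_mul, transpose_transpose, Matrix.mul_assoc]

end Frobenius

section Symmetric

variable {R m n : Type*}

/-- The submodule of symmetric matrices, the feasible set of the least-squares problem. -/
def symmetricSubmodule (n R : Type*) [Semiring R] : Submodule R (Matrix n n R) where
  carrier := {X | X.IsSymm}
  zero_mem' := isSymm_zero
  add_mem' := IsSymm.add
  smul_mem' t _ hX := hX.smul t

theorem isSymm_mul_mul_transpose [CommSemiring R] [Fintype n] (A : Matrix m n R)
    {X : Matrix n n R} (hX : X.IsSymm) : (A * X * Aᵀ).IsSymm := by
  simp only [IsSymm, transpose_mul, transpose_transpose, hX.eq, Matrix.mul_assoc]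

theorem forall_symmetric_trace_transpose_mul_eq_zero_iff [CommRing R] [LinearOrder R]
    [IsStrictOrderedRing R] [Fintype n] {M : Matrix n n R} (hM : M.IsSymm) :
    (∀ D ∈ symmetricSubmodule n R, trace (Mᵀ * D) = 0) ↔ M = 0 := by
  constructor
  · intro h
    exact frobeniusSq_eq_zero_iff.1 (trace_transpose_mul_self M ▸ h M hM)
  · rintro rfl D -
    rw [transpose_zero, Matrix.zero_mul, trace_zero]

end Symmetric

section LeastSquares

variable {R ι p : Type*} {m : ι → Type*} [Fintype ι] [Fintype p] [∀ i, Fintype (m i)]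

/-- The least-squares objective `∑ᵢ ‖Tᵢ - Aᵢ S Aᵢᵀ‖²`. The target `Tᵢ` stands for `Bᵢ - σ² I`, and
the number of rows of `Aᵢ` may depend on `i`. -/
def leastSquaresObjective [CommRing R] (A : ∀ i, Matrix (m i) p R) (T : ∀ i, Matrix (m i) (m i) R)
    (S : Matrix p p R) : R :=
  ∑ i, frobeniusSq (T i - A i * S * (A i)ᵀ)

/-- The residual `∑ᵢ Aᵢᵀ (Tᵢ - Aᵢ S Aᵢᵀ) Aᵢ` of the normal equations, which is `-1/2` times the
gradient of `leastSquaresObjective` at `S`. -/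
def normalResidual [CommRing R] (A : ∀ i, Matrix (m i) p R) (T : ∀ i, Matrix (m i) (m i) R)
    (S : Matrix p p R) : Matrix p p R :=
  ∑ i, (A i)ᵀ * (T i - A i * S * (A i)ᵀ) * A i

section CommRing

variable [CommRing R] (A : ∀ i, Matrix (m i) p R) (T : ∀ i, Matrix (m i) (m i) R)
  (S : Matrix p p R)

theorem leastSquaresObjective_add (D : Matrix p p R) :
    leastSquaresObjective A T (S + D) =
      leastSquaresObjective A T S + -2 * trace ((normalResidual A T S)ᵀ * D) +
        ∑ i, frobeniusSq (A i * D * (A i)ᵀ) := by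
  have hsummand (i : ι) : frobeniusSq (T i - A i * (S + D) * (A i)ᵀ) =
      frobeniusSq (T i - A i * S * (A i)ᵀ) +
        -2 * trace (((A i)ᵀ * (T i - A i * S * (A i)ᵀ) * A i)ᵀ * D) +
          frobeniusSq (A i * D * (A i)ᵀ) := by
    rw [Matrix.mul_add, Matrix.add_mul, ← sub_sub, frobeniusSq_sub, trace_transpose_mul_congruence]
    ring
  simp only [leastSquaresObjective, normalResidual, hsummand, Finset.sum_add_distrib,
    ← Finset.mul_sum, transpose_sum, Matrix.sum_mul, trace_sum]

theorem normalResidual_eq_zero_iff :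
    normalResidual A T S = 0 ↔
      ∑ i, (A i)ᵀ * A i * S * ((A i)ᵀ * A i) = ∑ i, (A i)ᵀ * T i * A i := by
  have hresidual : normalResidual A T S =
      ∑ i, (A i)ᵀ * T i * A i - ∑ i, (A i)ᵀ * A i * S * ((A i)ᵀ * A i) := by
    simp only [normalResidual, Matrix.mul_sub, Matrix.sub_mul, Finset.sum_sub_distrib,
      Matrix.mul_assoc]
  rw [hresidual, sub_eq_zero, eq_comm]

variable {T S}

theorem normalResidual_isSymm (hT : ∀ i, (T i).IsSymm) (hS : S.IsSymm) :
    (normalResidual A T S).IsSymm :=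
  (symmetricSubmodule p R).sum_mem fun i _ ↦ by
    have hresidual := (hT i).sub (isSymm_mul_mul_transpose (A i) hS)
    exact transpose_transpose (A i) ▸ isSymm_mul_mul_transpose (A i)ᵀ hresidual

end CommRing

theorem covariance_least_squares_first_order_condition_general
    [Field R] [LinearOrder R] [IsStrictOrderedRing R]
    (A : ∀ i, Matrix (m i) p R) {T : ∀ i, Matrix (m i) (m i) R} (hT : ∀ i, (T i).IsSymm)
    {S : Matrix p p R} (hS : S.IsSymm) :
    IsMinOn (leastSquaresObjective A T) {X | X.IsSymm} S ↔
      ∑ i, (A i)ᵀ * A i * S * ((A i)ᵀ * A i) = ∑ i, (A i)ᵀ * T i * A i := by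
  have hmin : IsMinOn (leastSquaresObjective A T) (symmetricSubmodule p R) S ↔
      ∀ D ∈ symmetricSubmodule p R, -2 * trace ((normalResidual A T S)ᵀ * D) = 0 := by
    refine isMinOn_submodule_iff_of_quadratic_expansion hS
      (fun D _ ↦ leastSquaresObjective_add A T S D) (fun t D _ ↦ ?_) (fun t D _ ↦ ?_)
      fun D _ ↦ Finset.sum_nonneg fun i _ ↦ frobeniusSq_nonneg _
    · rw [Matrix.mul_smul, trace_smul, smul_eq_mul, mul_left_comm]
    · simp only [Matrix.mul_smul, Matrix.smul_mul, frobeniusSq_smul, Finset.mul_sum]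
  have hneg_two : (-2 : R) ≠ 0 := neg_ne_zero.2 two_ne_zero
  simp only [mul_eq_zero, hneg_two, false_or] at hmin
  rw [← normalResidual_eq_zero_iff,
    ← forall_symmetric_trace_transpose_mul_eq_zero_iff (normalResidual_isSymm A hT hS)]
  exact hmin

end LeastSquares

/-- For symmetric `Bᵢ` and `σ ≥ 0`, a symmetric matrix `S` minimizes
`G(S) = Σᵢ ‖Bᵢ − (AᵢSAᵢᵀ + σ²I)‖_F²` over all symmetric `p×p` matrices iff it satisfies the
linear system `Σᵢ AᵢᵀAᵢ S AᵢᵀAᵢ = Σᵢ AᵢᵀBᵢAᵢ − σ² Σᵢ AᵢᵀAᵢ`. -/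
theorem covariance_least_squares_first_order_condition
    {n m p : ℕ} (A : Fin n → Matrix (Fin m) (Fin p) ℝ)
    (B : Fin n → Matrix (Fin m) (Fin m) ℝ) (hB : ∀ i, (B i)ᵀ = B i)
    (σ : ℝ) (hσ : 0 ≤ σ)
    (S : Matrix (Fin p) (Fin p) ℝ) (hS : Sᵀ = S) :
    (∀ S' : Matrix (Fin p) (Fin p) ℝ, S'ᵀ = S' →
        ∑ i, ∑ k, ∑ l,
            ((B i - (A i * S * (A i)ᵀ + σ ^ 2 • (1 : Matrix (Fin m) (Fin m) ℝ))) k l) ^ 2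
          ≤ ∑ i, ∑ k, ∑ l,
            ((B i - (A i * S' * (A i)ᵀ + σ ^ 2 • (1 : Matrix (Fin m) (Fin m) ℝ))) k l) ^ 2) ↔
      ∑ i, (A i)ᵀ * A i * S * ((A i)ᵀ * A i)
        = ∑ i, (A i)ᵀ * B i * A i - σ ^ 2 • ∑ i, (A i)ᵀ * A i := by
  have hT (i : Fin n) : (B i - σ ^ 2 • (1 : Matrix (Fin m) (Fin m) ℝ)).IsSymm :=
    IsSymm.sub (hB i) (isSymm_one.smul _)
  simpa [isMinOn_iff, leastSquaresObjective, frobeniusSq, IsSymm, sub_sub, add_comm,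
    Matrix.mul_sub, Matrix.sub_mul, Finset.smul_sum] using
    covariance_least_squares_first_order_condition_general A hT hS
end
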